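/- Let f be a homeomorphism of 𝕋^d homotopic to the identity with lift F, and let K ⊆ 𝕋^d be a minimal set of f. Suppose there exist integer vectors v¹, …, v^k ∈ ℤ^d with gcd(vⁱ₁, …, vⁱ_d) = 1 for each i, and a totally irrational vector ρ ∈ ℝ^k (i.e. 1, ρ₁, …, ρ_k are linearly independent over ℚ), such that ρ_K(F) ⊆ ⋂_{i=1}^k ( (ρ_i/‖vⁱ‖²)·vⁱ + {vⁱ}^⊥ ) and f has bounded mean motion parallel to vⁱ on K for each i = 1, …, k. Then f restricted to K is semi-conjugate to the k-dimensional irrational rotation R_ρ : 𝕋^k → 𝕋^k, x ↦ x + ρ mod ℤ^k, via a semi-conjugacy that is regular with respect to some k×d integer matrix B: there is a continuous surjection h : K → 𝕋^k with h∘f = R_ρ∘h on K admitting a lift H : π⁻¹(K) → ℝ^k with H∘F = H + ρ and sup_{z ∈ π⁻¹(K)} ‖H(z) − Bz‖ < ∞. -/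

import Mathlib

open Filter Topology

local notation "⟪" x ", " y "⟫" => @inner ℝ _ _ x y

noncomputable section

/-- Euclidean space `ℝ^d`. -/
abbrev Rd (d : ℕ) := EuclideanSpace ℝ (Fin d)

/-- The `d`-torus `𝕋^d = ℝ^d/ℤ^d`, realized as a product of circles. -/
abbrev Torus (d : ℕ) := Fin d → AddCircle (1 : ℝ)

/-- The quotient map `π : ℝ^d → 𝕋^d`. -/
def projT {d : ℕ} (z : Rd d) : Torus d := fun i => (z i : AddCircle (1 : ℝ))

/-- An integer vector viewed as an element of `ℝ^d`. -/
def intVec {d : ℕ} (m : Fin d → ℤ) : Rd d := WithLp.toLp 2 (fun i => (m i : ℝ))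

/-- A real vector viewed as an element of `ℝ^k`. -/
def vecR {k : ℕ} (ρ : Fin k → ℝ) : Rd k := WithLp.toLp 2 (fun i => ρ i)

/-- `F : ℝ^d → ℝ^d` is a lift of `f : 𝕋^d → 𝕋^d`:  `π ∘ F = f ∘ π` and
`F (z + m) = F z + m` for every integer vector `m`.  The existence of such a lift
expresses that `f` is homotopic to the identity. -/
def IsLift {d : ℕ} (f : Torus d ≃ₜ Torus d) (F : Rd d ≃ₜ Rd d) : Prop :=
  (∀ z : Rd d, projT (F z) = f (projT z)) ∧
  ∀ (z : Rd d) (m : Fin d → ℤ), F (z + intVec m) = F z + intVec m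

/-- The `n`-th iterate (`n ∈ ℤ`) of a homeomorphism. -/
def iterZ {X : Type*} [TopologicalSpace X] (F : X ≃ₜ X) (n : ℤ) : X → X := ⇑(F.toEquiv ^ n)

/-- `K` is a minimal set of `f`: nonempty, compact, invariant, and every orbit in `K`
is dense in `K`. -/
def IsMinimalSet {d : ℕ} (f : Torus d ≃ₜ Torus d) (K : Set (Torus d)) : Prop :=
  K.Nonempty ∧ IsCompact K ∧ f '' K = K ∧
  ∀ x ∈ K, K ⊆ closure (Set.range fun n : ℕ => (⇑f)^[n] x)

/-- `ρ ∈ ℝ^k` is totally irrational: `1, ρ₁, …, ρ_k` are linearly independent over `ℚ`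
(equivalently, over `ℤ`). -/
def TotallyIrrational {k : ℕ} (ρ : Fin k → ℝ) : Prop :=
  ∀ (m : Fin k → ℤ) (n : ℤ), (∑ i, (m i : ℝ) * ρ i) = (n : ℝ) → m = 0 ∧ n = 0

/-- The rotation `R_ρ : 𝕋^k → 𝕋^k`, `x ↦ x + ρ mod ℤ^k`. -/
def rotT {k : ℕ} (ρ : Fin k → ℝ) : Torus k → Torus k :=
  fun x i => x i + (ρ i : AddCircle (1 : ℝ))

/-- The rotation set of `F` on `K`:  all limits `(F^{nᵢ} xᵢ − xᵢ)/nᵢ → ρ` with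
`nᵢ ↗ ∞` and `xᵢ ∈ π⁻¹(K)`. -/
def rotSetOn {d : ℕ} (F : Rd d ≃ₜ Rd d) (K : Set (Torus d)) : Set (Rd d) :=
  {ρ | ∃ (n : ℕ → ℕ) (x : ℕ → Rd d), StrictMono n ∧ (∀ i, projT (x i) ∈ K) ∧
    Tendsto (fun i => (n i : ℝ)⁻¹ • ((⇑F)^[n i] (x i) - x i)) atTop (𝓝 ρ)}

/-- The affine hyperplane `lam • v + {v}^⊥`. -/
def affHyp {d : ℕ} (v : Rd d) (lam : ℝ) : Set (Rd d) :=
  {w | ∃ u : Rd d, ⟪u, v⟫ = 0 ∧ w = lam • v + u}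

/-- Bounded mean motion parallel to `v` on `K`:  `|⟨Fⁿ z − z − n ρ, v⟩| ≤ c` for all
`n ∈ ℤ` and `z ∈ π⁻¹(K)`, where `ρ = lam • v` is a point of the hyperplane
`lam • v + {v}^⊥` containing the rotation set (the value of the inner product does
not depend on the choice of `ρ` in this hyperplane). -/
def BddMeanMotionParallelOn {d : ℕ} (F : Rd d ≃ₜ Rd d) (v : Rd d) (lam : ℝ)
    (K : Set (Torus d)) : Prop :=
  ∃ c : ℝ, 0 < c ∧ ∀ (n : ℤ) (z : Rd d), projT z ∈ K →
    |⟪iterZ F n z - z - (n : ℝ) • (lam • v), v⟫| ≤ c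

section Projection

variable {d : ℕ}

theorem isOpenQuotientMap_projT : IsOpenQuotientMap (projT : Rd d → Torus d) :=
  (IsOpenQuotientMap.piMap fun _ : Fin d =>
    (QuotientAddGroup.isOpenQuotientMap_mk :
      IsOpenQuotientMap ((↑) : ℝ → AddCircle (1 : ℝ)))).comp
    (EuclideanSpace.equiv (Fin d) ℝ).toHomeomorph.isOpenQuotientMap

theorem projT_add_intVec (z : Rd d) (m : Fin d → ℤ) : projT (z + intVec m) = projT z := by
  funext i
  refine (QuotientAddGroup.eq.trans AddSubgroup.mem_zmultiples_iff).2 ⟨-m i, ?_⟩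
  simp [intVec]

theorem exists_eq_add_intVec {z w : Rd d} (h : projT z = projT w) :
    ∃ m : Fin d → ℤ, z = w + intVec m := by
  have key : ∀ i, ∃ n : ℤ, z i = w i + n := by
    intro i
    have hi : ((z i : ℝ) : AddCircle (1 : ℝ)) = (w i : ℝ) := congrFun h i
    obtain ⟨n, hn⟩ := (QuotientAddGroup.eq.trans AddSubgroup.mem_zmultiples_iff).1 hi
    refine ⟨-n, ?_⟩
    simp at hn
    push_cast
    linarith
  choose m hm using key
  exact ⟨m, by ext i; simpa [intVec] using hm i⟩

theorem continuousOn_of_comp_projT {Y : Type*} [TopologicalSpace Y] {K : Set (Torus d)}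
    {h : Torus d → Y} (hc : ContinuousOn (h ∘ projT) (projT ⁻¹' K)) : ContinuousOn h K := by
  rw [continuousOn_iff_continuous_domRestrict] at hc ⊢
  have hq : IsOpenQuotientMap (K.restrictPreimage (projT : Rd d → Torus d)) :=
    ⟨K.restrictPreimage_surjective isOpenQuotientMap_projT.surjective,
      isOpenQuotientMap_projT.continuous.restrictPreimage,
      isOpenQuotientMap_projT.isOpenMap.restrictPreimage K⟩
  exact hq.continuous_comp_iff.1 hc

theorem inner_intVec_intVec (m w : Fin d → ℤ) :
    ⟪intVec m, intVec w⟫ = ((∑ j, m j * w j : ℤ) : ℝ) := by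
  simp [intVec, PiLp.inner_apply, mul_comm]

end Projection

section Iterates

variable {d : ℕ} {F : Rd d ≃ₜ Rd d}

theorem continuous_iterZ {X : Type*} [TopologicalSpace X] (F : X ≃ₜ X) (n : ℤ) :
    Continuous (iterZ F n) := by
  have h : iterZ F n = ⇑(F ^ n) := by
    let φ : (X ≃ₜ X) →* Equiv.Perm X :=
      { toFun := Homeomorph.toEquiv, map_one' := rfl, map_mul' := fun _ _ => rfl }
    exact congrArg DFunLike.coe (map_zpow φ F n).symm
  rw [h]
  exact (F ^ n).continuous

theorem iterZ_apply {X : Type*} [TopologicalSpace X] (F : X ≃ₜ X) (n : ℤ) (z : X) :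
    iterZ F n (F z) = iterZ F (n + 1) z := by
  simp only [iterZ, zpow_add_one, Equiv.Perm.mul_apply]
  rfl

theorem iterZ_add_intVec (hF : ∀ (z : Rd d) (m : Fin d → ℤ), F (z + intVec m) = F z + intVec m)
    (n : ℤ) (z : Rd d) (m : Fin d → ℤ) : iterZ F n (z + intVec m) = iterZ F n z + intVec m := by
  induction n generalizing z with
  | zero => rfl
  | succ n ih => rw [← iterZ_apply, ← iterZ_apply, hF, ih]
  | pred n ih =>
    obtain ⟨y, rfl⟩ := F.surjective z
    rw [← hF, iterZ_apply, iterZ_apply, sub_add_cancel, ih]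

theorem projT_iterate {f : Torus d ≃ₜ Torus d} (hF : IsLift f F) (n : ℕ) (z : Rd d) :
    projT ((⇑F)^[n] z) = (⇑f)^[n] (projT z) :=
  (Function.Semiconj.iterate_right (f := projT) (ga := F) (gb := f) hF.1 n) z

end Iterates

section GottschalkHedlund

variable {d : ℕ} {f : Torus d ≃ₜ Torus d} {F : Rd d ≃ₜ Rd d} {K : Set (Torus d)}

theorem projT_apply_mem (hF : IsLift f F) (hK : IsMinimalSet f K) {z : Rd d}
    (hz : projT z ∈ K) : projT (F z) ∈ K := by
  rw [hF.1, ← hK.2.2.1]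
  exact Set.mem_image_of_mem f hz

/-- A lower semicontinuous function on `π⁻¹(K)` which is invariant under `F` and integer
translations is constant when `K` is minimal. -/
theorem eq_of_lowerSemicontinuousOn_of_invariant (hF : IsLift f F) (hK : IsMinimalSet f K)
    {G : Rd d → ℝ} (hG : LowerSemicontinuousOn G (projT ⁻¹' K))
    (hinv : ∀ z, projT z ∈ K → G (F z) = G z)
    (hper : ∀ z, projT z ∈ K → ∀ m, G (z + intVec m) = G z)
    {z w : Rd d} (hz : projT z ∈ K) (hw : projT w ∈ K) : G z = G w := by
  have orbit : ∀ w, projT w ∈ K → ∀ n : ℕ,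
      projT ((⇑F)^[n] w) ∈ K ∧ G ((⇑F)^[n] w) = G w := by
    intro w hw n
    induction n with
    | zero => exact ⟨hw, rfl⟩
    | succ n ih =>
      rw [Function.iterate_succ_apply']
      exact ⟨projT_apply_mem hF hK ih.1, (hinv _ ih.1).trans ih.2⟩
  have le : ∀ z w, projT z ∈ K → projT w ∈ K → G z ≤ G w := by
    intro z w hz hw
    by_contra! hlt
    obtain ⟨U, hU, hzU, hUG⟩ := mem_nhdsWithin.1 (hG z hz _ hlt)
    obtain ⟨_, ⟨y, hyU, hy⟩, n, rfl⟩ := mem_closure_iff.1 (hK.2.2.2 _ hw hz) _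
      (isOpenQuotientMap_projT.isOpenMap U hU) (Set.mem_image_of_mem projT hzU)
    dsimp only at hy
    rw [← projT_iterate hF] at hy
    obtain ⟨hmem, heq⟩ := orbit w hw n
    have hyK : projT y ∈ K := hy ▸ hmem
    obtain ⟨m, rfl⟩ := exists_eq_add_intVec hy
    have : G w < G ((⇑F)^[n] w + intVec m) := hUG ⟨hyU, hyK⟩
    rw [hper _ hmem, heq] at this
    exact lt_irrefl _ this
  exact le_antisymm (le z w hz hw) (le w z hw hz)

/-- Bounded deviations on a minimal set: the supremum over the orbit yields a continuous function
conjugating the motion parallel to `w` to a translation. -/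
theorem exists_continuousOn_semiconj_translation (hF : IsLift f F) (hK : IsMinimalSet f K)
    (w : Fin d → ℤ) (r c : ℝ)
    (hc : ∀ (n : ℤ) (z : Rd d), projT z ∈ K → |⟪iterZ F n z - z, intVec w⟫ - n * r| ≤ c) :
    ∃ H : Rd d → ℝ, ContinuousOn H (projT ⁻¹' K) ∧
      (∀ z, projT z ∈ K → ∀ m : Fin d → ℤ,
        H (z + intVec m) = H z + ((∑ j, m j * w j : ℤ) : ℝ)) ∧
      (∀ z, projT z ∈ K → H (F z) = H z + r) ∧
      ∀ z, projT z ∈ K → |H z - ⟪z, intVec w⟫| ≤ c := by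
  set a : ℤ → Rd d → ℝ := fun n z => ⟪iterZ F n z, intVec w⟫ - n * r with ha
  have hbound : ∀ z, projT z ∈ K → ∀ n, |a n z - ⟪z, intVec w⟫| ≤ c := by
    intro z hz n
    have h := hc n z hz
    rw [inner_sub_left] at h
    rwa [ha, sub_right_comm]
  have habove : ∀ z, projT z ∈ K → BddAbove (Set.range fun n => a n z) := by
    rintro z hz
    refine ⟨⟪z, intVec w⟫ + c, ?_⟩
    rintro _ ⟨n, rfl⟩
    linarith [(abs_le.1 (hbound z hz n)).2]
  have hbelow : ∀ z, projT z ∈ K → BddBelow (Set.range fun n => a n z) := by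
    rintro z hz
    refine ⟨⟪z, intVec w⟫ - c, ?_⟩
    rintro _ ⟨n, rfl⟩
    linarith [(abs_le.1 (hbound z hz n)).1]
  have hcont : ∀ n, Continuous (a n) := fun n =>
    ((continuous_iterZ F n).inner continuous_const).sub continuous_const
  have hshift : ∀ z n, a n (F z) = a (n + 1) z + r := by
    intro z n
    simp only [ha, iterZ_apply]
    push_cast
    ring
  have htrans : ∀ z m n, a n (z + intVec m) = a n z + ((∑ j, m j * w j : ℤ) : ℝ) := by
    intro z m n
    simp only [ha, iterZ_add_intVec hF.2, inner_add_left, inner_intVec_intVec]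
    ring
  set S : Rd d → ℝ := fun z => ⨆ n, a n z with hS
  set I : Rd d → ℝ := fun z => ⨅ n, a n z with hI
  have hSlsc : LowerSemicontinuousOn S (projT ⁻¹' K) :=
    lowerSemicontinuousOn_ciSup habove fun n => (hcont n).lowerSemicontinuous.lowerSemicontinuousOn _
  have hIusc : UpperSemicontinuousOn I (projT ⁻¹' K) :=
    upperSemicontinuousOn_ciInf hbelow fun n => (hcont n).upperSemicontinuous.upperSemicontinuousOn _
  have hSF : ∀ z, projT z ∈ K → S (F z) = S z + r := by
    intro z hz
    simp only [hS, hshift]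
    rw [← ciSup_add (((Equiv.addRight (1 : ℤ)).surjective.range_comp fun n => a n z) ▸ habove z hz)]
    exact congrArg (· + r) ((Equiv.addRight (1 : ℤ)).iSup_comp (g := fun n => a n z))
  have hIF : ∀ z, projT z ∈ K → I (F z) = I z + r := by
    intro z hz
    simp only [hI, hshift]
    rw [← ciInf_add (((Equiv.addRight (1 : ℤ)).surjective.range_comp fun n => a n z) ▸ hbelow z hz)]
    exact congrArg (· + r) ((Equiv.addRight (1 : ℤ)).iInf_comp (g := fun n => a n z))
  have hSm : ∀ z, projT z ∈ K → ∀ m : Fin d → ℤ,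
      S (z + intVec m) = S z + ((∑ j, m j * w j : ℤ) : ℝ) := by
    intro z hz m
    simp only [hS, htrans]
    rw [ciSup_add (habove z hz)]
  have hIm : ∀ z, projT z ∈ K → ∀ m : Fin d → ℤ,
      I (z + intVec m) = I z + ((∑ j, m j * w j : ℤ) : ℝ) := by
    intro z hz m
    simp only [hI, htrans]
    rw [ciInf_add (hbelow z hz)]
  have hlsc : LowerSemicontinuousOn (fun z => S z + -I z) (projT ⁻¹' K) :=
    hSlsc.add fun z hz b hb => by
      filter_upwards [hIusc z hz (-b) (by linarith)] with y hy
      linarith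
  refine ⟨S, ?_, hSm, hSF, ?_⟩
  · intro z hz
    rw [continuousWithinAt_iff_lower_upperSemicontinuousWithinAt]
    refine ⟨hSlsc z hz, ?_⟩
    have hconst : ∀ y ∈ projT ⁻¹' K, S y = I y + (S z - I z) := by
      intro y hy
      have := eq_of_lowerSemicontinuousOn_of_invariant hF hK hlsc
        (fun z hz => by rw [hSF z hz, hIF z hz]; ring)
        (fun z hz m => by rw [hSm z hz, hIm z hz]; ring) hy hz
      linarith
    intro b hb
    have hb' : I z < b - (S z - I z) := by linarith
    filter_upwards [hIusc z hz _ hb', self_mem_nhdsWithin] with y hy hyK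
    rw [hconst y hyK]
    linarith
  · intro z hz
    have h0 := abs_le.1 (hbound z hz 0)
    have h1 : a 0 z ≤ S z := le_ciSup (habove z hz) 0
    have h2 : S z ≤ ⟪z, intVec w⟫ + c :=
      ciSup_le fun n => by linarith [(abs_le.1 (hbound z hz n)).2]
    rw [abs_le]
    constructor <;> linarith

end GottschalkHedlund

section Kronecker

open MeasureTheory UnitAddTorus

variable {k : ℕ}

theorem mFourier_apply_add (m : Fin k → ℤ) (x y : Torus k) :
    mFourier m (x + y) = mFourier m x * mFourier m y := by
  simp only [mFourier, ContinuousMap.coe_mk, Pi.add_apply, ← Finset.prod_mul_distrib]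
  refine Finset.prod_congr rfl fun i _ => ?_
  simp [fourier_apply, smul_add, AddCircle.toCircle_add]

theorem mFourier_nsmul (m : Fin k → ℤ) (x : Torus k) (n : ℕ) :
    mFourier m (n • x) = mFourier m x ^ n := by
  induction n with
  | zero => simp [mFourier]
  | succ n ih => rw [succ_nsmul, mFourier_apply_add, ih, pow_succ]

theorem norm_mFourier_apply_le (m : Fin k → ℤ) (x : Torus k) : ‖mFourier m x‖ ≤ 1 :=
  ((mFourier m).norm_coe_le_norm x).trans mFourier_norm.le

theorem mFourier_projT (m : Fin k → ℤ) (ρ : Fin k → ℝ) :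
    mFourier m (projT (vecR ρ)) =
      Complex.exp (2 * Real.pi * Complex.I * (∑ i, (m i : ℝ) * ρ i : ℝ)) := by
  simp only [mFourier, ContinuousMap.coe_mk, projT, vecR, fourier_coe_apply]
  rw [← Complex.exp_sum]
  congr 1
  push_cast
  rw [Finset.mul_sum]
  refine Finset.sum_congr rfl fun i _ => ?_
  simp
  ring

theorem mFourier_projT_ne_one {ρ : Fin k → ℝ} (hρ : TotallyIrrational ρ) {m : Fin k → ℤ}
    (hm : m ≠ 0) : mFourier m (projT (vecR ρ)) ≠ 1 := by
  rw [mFourier_projT, Ne, Complex.exp_eq_one_iff]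
  rintro ⟨n, hn⟩
  rw [mul_comm] at hn
  have h := mul_right_cancel₀ Complex.two_pi_I_ne_zero hn
  exact hm (hρ m n (by exact_mod_cast h)).1

/-- Weyl equidistribution for the orbits of a totally irrational rotation. -/
theorem tendsto_average_rotation {ρ : Fin k → ℝ} (hρ : TotallyIrrational ρ)
    (μ : Measure (Torus k)) [IsProbabilityMeasure μ] [μ.IsAddLeftInvariant]
    (x : Torus k) (g : C(Torus k, ℂ)) :
    Tendsto (fun n : ℕ => (n : ℂ)⁻¹ * ∑ j ∈ Finset.range n, g (x + j • projT (vecR ρ))) atTop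
      (𝓝 (∫ y, g y ∂μ)) := by
  set A : ℕ → C(Torus k, ℂ) → ℂ :=
    fun n g => (n : ℂ)⁻¹ * ∑ j ∈ Finset.range n, g (x + j • projT (vecR ρ)) with hA
  have hint : ∀ g : C(Torus k, ℂ), Integrable g μ := fun g =>
    g.continuous.integrable_of_hasCompactSupport (HasCompactSupport.of_compactSpace _)
  let P : Submodule ℂ C(Torus k, ℂ) :=
    { carrier := {g | Tendsto (fun n => A n g) atTop (𝓝 (∫ y, g y ∂μ))}
      add_mem' := by
        intro g₁ g₂ h₁ h₂
        have h := Tendsto.add h₁ h₂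
        rw [← integral_add (hint g₁) (hint g₂)] at h
        refine h.congr fun n => ?_
        simp only [hA, ContinuousMap.add_apply, Finset.sum_add_distrib, mul_add]
      zero_mem' := by simp [hA]
      smul_mem' := by
        intro b g h
        have h' := Tendsto.const_mul b h
        rw [← integral_const_mul] at h'
        refine h'.congr fun n => ?_
        simp only [hA, ContinuousMap.smul_apply, smul_eq_mul, ← Finset.mul_sum]
        ring }
  have hmon : ∀ m, mFourier m ∈ P := by
    intro m
    change Tendsto (fun n => A n (mFourier m)) atTop (𝓝 (∫ y, mFourier m y ∂μ))
    by_cases hm : m = 0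
    · subst hm
      simp only [mFourier_zero, hA, ContinuousMap.one_apply, integral_const, probReal_univ, one_smul]
      refine tendsto_const_nhds.congr' ?_
      filter_upwards [eventually_ne_atTop 0] with n hn
      simp [hn]
    · set ζ := mFourier m (projT (vecR ρ)) with hζ
      have hζ1 : ζ ≠ 1 := mFourier_projT_ne_one hρ hm
      have hzero : ∫ y, mFourier m y ∂μ = 0 := by
        have h := integral_add_left_eq_self (μ := μ) (fun y => mFourier m y) (projT (vecR ρ))
        simp only [mFourier_apply_add] at h
        rw [integral_const_mul] at h
        have h' : (ζ - 1) * ∫ y, mFourier m y ∂μ = 0 := by rw [sub_mul, h]; ring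
        exact (mul_eq_zero.1 h').resolve_left (sub_ne_zero.2 hζ1)
      rw [hzero]
      refine squeeze_zero_norm (a := fun n : ℕ => (n : ℝ)⁻¹ * (2 / ‖ζ - 1‖)) (fun n => ?_) ?_
      · simp only [hA, mFourier_apply_add, mFourier_nsmul, ← Finset.mul_sum, ← hζ]
        rw [geom_sum_eq hζ1, norm_mul, norm_mul, norm_div, norm_inv, Complex.norm_natCast]
        have h1 : ‖ζ ^ n - 1‖ ≤ 2 := by
          refine (norm_sub_le _ _).trans ?_
          rw [norm_pow, norm_one]
          linarith [pow_le_one₀ (n := n) (norm_nonneg ζ) (norm_mFourier_apply_le m _)]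
        gcongr
        calc ‖mFourier m x‖ * (‖ζ ^ n - 1‖ / ‖ζ - 1‖) ≤ 1 * (2 / ‖ζ - 1‖) := by
              gcongr
              exact norm_mFourier_apply_le m x
          _ = _ := one_mul _
      · simpa using (tendsto_inv_atTop_nhds_zero_nat (𝕜 := ℝ)).mul_const (2 / ‖ζ - 1‖)
  have hA_norm : ∀ n g, ‖A n g‖ ≤ ‖g‖ := by
    intro n g
    rw [hA, norm_mul, norm_inv, Complex.norm_natCast]
    have h : ‖∑ j ∈ Finset.range n, g (x + j • projT (vecR ρ))‖ ≤ n * ‖g‖ := by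
      refine (norm_sum_le_of_le _ fun j _ => g.norm_coe_le_norm _).trans ?_
      simp
    rcases Nat.eq_zero_or_pos n with rfl | hn
    · simp
    · rw [inv_mul_le_iff₀ (by exact_mod_cast hn)]
      exact h
  have hI_norm : ∀ g : C(Torus k, ℂ), ‖∫ y, g y ∂μ‖ ≤ ‖g‖ := by
    intro g
    simpa using norm_integral_le_of_norm_le_const (μ := μ) (.of_forall g.norm_coe_le_norm)
  have hA_sub : ∀ n g p, A n (g - p) = A n g - A n p := by
    intro n g p
    simp only [hA, ContinuousMap.sub_apply, Finset.sum_sub_distrib, mul_sub]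
  have hclosure : g ∈ (Submodule.span ℂ (Set.range (mFourier (d := Fin k)))).topologicalClosure := by
    rw [span_mFourier_closure_eq_top]
    trivial
  rw [Metric.tendsto_atTop]
  intro ε hε
  obtain ⟨p, hp, hgp⟩ := Metric.mem_closure_iff.1 hclosure (ε / 3) (by positivity)
  have hpP : Tendsto (fun n => A n p) atTop (𝓝 (∫ y, p y ∂μ)) :=
    Submodule.span_le.2 (Set.range_subset_iff.2 hmon) hp
  obtain ⟨N, hN⟩ := Metric.tendsto_atTop.1 hpP (ε / 3) (by positivity)
  refine ⟨N, fun n hn => ?_⟩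
  have h1 := hA_norm n (g - p)
  have h2 := hI_norm (g - p)
  have h3 := hN n hn
  simp only [ContinuousMap.sub_apply] at h2
  rw [integral_sub (hint g) (hint p)] at h2
  rw [hA_sub] at h1
  rw [dist_eq_norm] at hgp h3 ⊢
  calc ‖A n g - ∫ y, g y ∂μ‖
      = ‖(A n g - A n p) + (A n p - ∫ y, p y ∂μ) - (∫ y, g y ∂μ - ∫ y, p y ∂μ)‖ := by
        congr 1; ring
    _ ≤ ‖A n g - A n p‖ + ‖A n p - ∫ y, p y ∂μ‖ + ‖∫ y, g y ∂μ - ∫ y, p y ∂μ‖ :=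
        (norm_sub_le _ _).trans (by gcongr; exact norm_add_le _ _)
    _ < ε := by linarith

/-- A totally irrational rotation admits no proper nonempty closed forward invariant set. -/
theorem eq_univ_of_isClosed_of_rotT_invariant {ρ : Fin k → ℝ} (hρ : TotallyIrrational ρ)
    {C : Set (Torus k)} (hC : IsClosed C) (hne : C.Nonempty)
    (hinv : ∀ x ∈ C, rotT ρ x ∈ C) : C = Set.univ := by
  obtain ⟨x, hx⟩ := hne
  have horbit : ∀ j : ℕ, x + j • projT (vecR ρ) ∈ C := by
    intro j
    induction j with
    | zero => simpa using hx
    | succ j ih =>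
      rw [succ_nsmul, ← add_assoc]
      exact hinv _ ih
  let μ : Measure (Torus k) := Measure.addHaarMeasure ⊤
  have : IsProbabilityMeasure μ := ⟨by
    simpa using Measure.addHaarMeasure_self (K₀ := (⊤ : TopologicalSpace.PositiveCompacts (Torus k)))⟩
  let g : C(Torus k, ℂ) :=
    ⟨fun y => (Metric.infDist y C : ℂ),
      Complex.continuous_ofReal.comp (Metric.continuous_infDist_pt C)⟩
  have hlim := tendsto_average_rotation hρ μ x g
  have hzero : ∀ j : ℕ, g (x + j • projT (vecR ρ)) = 0 := fun j => by
    simp [g, Metric.infDist_zero_of_mem (horbit j)]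
  simp only [hzero, Finset.sum_const_zero, mul_zero] at hlim
  have hint : ∫ y, Metric.infDist y C ∂μ = 0 := by
    have h := tendsto_nhds_unique hlim tendsto_const_nhds
    have h' : ∫ y, (Metric.infDist y C : ℂ) ∂μ = 0 := h
    rw [integral_complex_ofReal] at h'
    exact_mod_cast h'
  have hcont : Continuous fun y => Metric.infDist y C := Metric.continuous_infDist_pt C
  have hae := (integral_eq_zero_iff_of_nonneg (fun _ => Metric.infDist_nonneg)
    (hcont.integrable_of_hasCompactSupport (HasCompactSupport.of_compactSpace _))).1 hint
  have heq := (hcont.ae_eq_iff_eq μ continuous_const).1 hae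
  refine Set.eq_univ_of_forall fun y => ?_
  exact (hC.mem_iff_infDist_zero ⟨x, hx⟩).2 (congrFun heq y)

end Kronecker

/-- **Corollary 2.2.**  If the rotation set of `f` on a minimal set `K` is contained in
the intersection of the hyperplanes `(ρᵢ/‖vⁱ‖²) vⁱ + {vⁱ}^⊥` for integer vectors
`v¹, …, v^k` with coprime coordinates and a totally irrational `ρ ∈ ℝ^k`, and `f` has
bounded mean motion parallel to each `vⁱ` on `K`, then `f|_K` is semi-conjugate to the
`k`-dimensional irrational rotation `R_ρ`, regularly with respect to some `k × d`
integer matrix `B`. -/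
theorem statement2 {d k : ℕ} (f : Torus d ≃ₜ Torus d) (F : Rd d ≃ₜ Rd d) (hF : IsLift f F)
    (K : Set (Torus d)) (hK : IsMinimalSet f K)
    (v : Fin k → Fin d → ℤ) (hgcd : ∀ i, Finset.univ.gcd (v i) = 1)
    (ρ : Fin k → ℝ) (hρ : TotallyIrrational ρ)
    (hrot : rotSetOn F K ⊆ ⋂ i, affHyp (intVec (v i)) (ρ i / ‖intVec (v i)‖ ^ 2))
    (hbmm : ∀ i, BddMeanMotionParallelOn F (intVec (v i)) (ρ i / ‖intVec (v i)‖ ^ 2) K) :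
    ∃ (h : Torus d → Torus k) (B : Fin k → Fin d → ℤ),
      ContinuousOn h K ∧ h '' K = Set.univ ∧
      (∀ x ∈ K, h (f x) = rotT ρ (h x)) ∧
      ∃ H : Rd d → Rd k,
        (∀ z : Rd d, projT z ∈ K → projT (H z) = h (projT z)) ∧
        (∀ z : Rd d, projT z ∈ K → H (F z) = H z + vecR ρ) ∧
        ∃ c : ℝ, ∀ z : Rd d, projT z ∈ K →
          ‖H z - vecR (fun i => ∑ j, (B i j : ℝ) * z j)‖ ≤ c := by
  choose c hcpos hc using hbmm
  have hv : ∀ i, ‖intVec (v i)‖ ^ 2 ≠ 0 := by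
    intro i h0
    have hvi : intVec (v i) = 0 := by simpa using h0
    have hz : ∀ j ∈ Finset.univ, v i j = 0 := fun j _ => by
      simpa [intVec] using congrArg (fun z : Rd d => z j) hvi
    have := hgcd i
    rw [Finset.gcd_eq_zero_iff.2 hz] at this
    exact zero_ne_one this
  choose H hHcont hHm hHF hHb using fun i =>
    exists_continuousOn_semiconj_translation hF hK (v i) (ρ i) (c i) fun n z hz => by
      have h := hc i n z hz
      rwa [inner_sub_left, inner_smul_left, inner_smul_left, real_inner_self_eq_norm_sq,
        RCLike.conj_to_real, RCLike.conj_to_real, div_mul_cancel₀ _ (hv i)] at h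
  let L : Rd d → Rd k := fun z => vecR fun i => H i z
  have hsurj : Function.Surjective (projT : Rd d → Torus d) := isOpenQuotientMap_projT.surjective
  let h : Torus d → Torus k := fun x => projT (L (Function.surjInv hsurj x))
  have hh : ∀ z : Rd d, projT z ∈ K → projT (L z) = h (projT z) := by
    intro z hz
    have hs := Function.surjInv_eq hsurj (projT z)
    obtain ⟨m, hm⟩ := exists_eq_add_intVec hs
    have hL : L (z + intVec m) = L z + intVec fun i => ∑ j, m j * v i j := by
      ext i
      exact hHm i z hz m
    change projT (L z) = projT (L (Function.surjInv hsurj (projT z)))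
    rw [hm, hL, projT_add_intVec]
  have hLF : ∀ z : Rd d, projT z ∈ K → L (F z) = L z + vecR ρ := by
    intro z hz
    ext i
    exact hHF i z hz
  have hrotT : ∀ x ∈ K, h (f x) = rotT ρ (h x) := by
    intro x hx
    obtain ⟨z, rfl⟩ := hsurj x
    rw [← hF.1, ← hh _ (projT_apply_mem hF hK hx), hLF z hx, ← hh z hx]
    rfl
  have hcont : ContinuousOn h K := by
    refine continuousOn_of_comp_projT (ContinuousOn.congr (f := fun z => projT (L z)) ?_
      fun z hz => (hh z hz).symm)
    refine continuousOn_pi.2 fun i => ?_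
    exact (AddCircle.continuous_mk' (1 : ℝ)).comp_continuousOn (hHcont i)
  refine ⟨h, v, hcont, ?_, hrotT, L, hh, hLF, √(∑ i, c i ^ 2), fun z hz => ?_⟩
  · refine eq_univ_of_isClosed_of_rotT_invariant hρ (hK.2.1.image_of_continuousOn hcont).isClosed
      (hK.1.image h) ?_
    rintro _ ⟨x, hx, rfl⟩
    rw [← hrotT x hx]
    refine ⟨f x, ?_, rfl⟩
    rw [← hK.2.2.1]
    exact Set.mem_image_of_mem f hx
  · rw [EuclideanSpace.norm_eq]
    refine Real.sqrt_le_sqrt (Finset.sum_le_sum fun i _ => ?_)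
    have hi := hHb i z hz
    have hin : ⟪z, intVec (v i)⟫ = ∑ j, (v i j : ℝ) * z j := by
      simp [intVec, PiLp.inner_apply]
    rw [hin] at hi
    exact pow_le_pow_left₀ (norm_nonneg _) hi 2
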